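/- The function Λ: ℝⁿ → ℝ is bounded from above and strictly concave: for all ξ ≠ η in ℝⁿ and all t ∈ (0,1), Λ(tξ + (1-t)η) > tΛ(ξ) + (1-t)Λ(η). -/

import Mathlib

/-!
Writing a positive solution as `u = exp w` with `w = ξ · x + φ` and `φ` periodic, the equation
`Pu = Λ(ξ) u` becomes `-tr (a D²w) - a ∇w · ∇w + b · ∇w + c = Λ(ξ)` (`exists_log`).

Evaluated at a minimum of `φ`, where `∇φ = 0` and `tr (a D²φ) ≥ 0` (`trace_hessian_nonneg`), this
gives `Λ(ξ) ≤ -a₀ |ξ|² + b · ξ + c`, so `Λ` is bounded above (`bddAbove_range`).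

For concavity, let `w₁, w₂, w₃` be the logarithms belonging to `ξ`, `η` and `sξ + tη`, with
`s + t = 1`. The function `v = s w₁ + t w₂ - w₃` is periodic and, for a suitable drift `β`,
`-tr (a D²v) + β · ∇v = sΛ(ξ) + tΛ(η) - Λ(sξ + tη) + s t a ∇(w₁ - w₂) · ∇(w₁ - w₂)`.
If strict concavity failed, the right-hand side would be nonnegative, so `v` would be constant by
the strong minimum principle (`strong_min`), and both terms on the right would vanish everywhere.
But at a minimum of the periodic part of `w₁ - w₂` the gradient of `w₁ - w₂` is `ξ - η ≠ 0`,
a contradiction with ellipticity (`strict_ineq`).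
-/

set_option autoImplicit false

open MeasureTheory Filter

noncomputable section

/-- The partial derivative of a function on `ℝⁿ` in the `i`-th coordinate direction. -/
def pd {n : ℕ} {E : Type*} [NormedAddCommGroup E] [NormedSpace ℝ E]
    (i : Fin n) (u : (Fin n → ℝ) → E) (x : Fin n → ℝ) : E :=
  fderiv ℝ u x (Pi.single i 1)

/-- `ℤⁿ`-periodicity of a function on `ℝⁿ`. -/
def ZPeriodic {n : ℕ} {α : Type*} (f : (Fin n → ℝ) → α) : Prop :=
  ∀ (x : Fin n → ℝ) (γ : Fin n → ℤ), f (x + fun i => (γ i : ℝ)) = f x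

/-- The dot product `ξ · x` of two real vectors. -/
def dotR {n : ℕ} (ξ x : Fin n → ℝ) : ℝ := ∑ i, ξ i * x i

/-- The pairing `k · x` of a complex vector `k` with a real vector `x`. -/
def dotCR {n : ℕ} (k : Fin n → ℂ) (x : Fin n → ℝ) : ℂ := ∑ i, k i * (x i : ℂ)

/-- The second-order operator
`Pu(x) = -∑ a_{ij}(x) ∂_i∂_j u(x) + ∑ b_i(x) ∂_i u(x) + c(x) u(x)`
acting on real-valued functions. -/
def Pop {n : ℕ} (a : (Fin n → ℝ) → Fin n → Fin n → ℝ) (b : (Fin n → ℝ) → Fin n → ℝ)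
    (c : (Fin n → ℝ) → ℝ) (u : (Fin n → ℝ) → ℝ) (x : Fin n → ℝ) : ℝ :=
  -(∑ i, ∑ j, a x i j * pd i (pd j u) x) + ∑ i, b x i * pd i u x + c x * u x

/-- The same operator `P` acting on complex-valued functions. -/
def PopC {n : ℕ} (a : (Fin n → ℝ) → Fin n → Fin n → ℝ) (b : (Fin n → ℝ) → Fin n → ℝ)
    (c : (Fin n → ℝ) → ℝ) (u : (Fin n → ℝ) → ℂ) (x : Fin n → ℝ) : ℂ :=
  -(∑ i, ∑ j, (a x i j : ℂ) * pd i (pd j u) x) + ∑ i, (b x i : ℂ) * pd i u x + (c x : ℂ) * u x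

/-- The formal adjoint `P*v = -∑ ∂_i∂_j(a_{ij} v) - ∑ ∂_i(b_i v) + c v`
acting on real-valued functions. -/
def Padj {n : ℕ} (a : (Fin n → ℝ) → Fin n → Fin n → ℝ) (b : (Fin n → ℝ) → Fin n → ℝ)
    (c : (Fin n → ℝ) → ℝ) (v : (Fin n → ℝ) → ℝ) (x : Fin n → ℝ) : ℝ :=
  -(∑ i, ∑ j, pd i (pd j fun z => a z i j * v z) x) - (∑ i, pd i (fun y => b y i * v y) x)
    + c x * v x

/-- The formal adjoint `P*` acting on complex-valued functions. -/
def PadjC {n : ℕ} (a : (Fin n → ℝ) → Fin n → Fin n → ℝ) (b : (Fin n → ℝ) → Fin n → ℝ)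
    (c : (Fin n → ℝ) → ℝ) (v : (Fin n → ℝ) → ℂ) (x : Fin n → ℝ) : ℂ :=
  -(∑ i, ∑ j, pd i (pd j fun z => (a z i j : ℂ) * v z) x)
    - (∑ i, pd i (fun y => (b y i : ℂ) * v y) x) + (c x : ℂ) * v x

/-- The standing assumptions on the operator `P`: the coefficients are real-valued,
`ℤⁿ`-periodic, `a_{ij} ∈ C²`, `b_i ∈ C¹`, `c` continuous, and the uniform ellipticity
condition `∑ a_{ij}(x) ζ_i ζ_j ≥ a₀ |ζ|²` holds. -/
def IsPeriodicElliptic {n : ℕ} (a : (Fin n → ℝ) → Fin n → Fin n → ℝ)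
    (b : (Fin n → ℝ) → Fin n → ℝ) (c : (Fin n → ℝ) → ℝ) : Prop :=
  (∀ i j, ContDiff ℝ 2 fun x => a x i j) ∧ (∀ i, ContDiff ℝ 1 fun x => b x i) ∧
    Continuous c ∧ ZPeriodic a ∧ ZPeriodic b ∧ ZPeriodic c ∧
    ∃ a₀ : ℝ, 0 < a₀ ∧
      ∀ x ζ : Fin n → ℝ, a₀ * ∑ i, ζ i ^ 2 ≤ ∑ i, ∑ j, a x i j * ζ i * ζ j

/-- `lam` is a real number such that `Pu = lam·u` admits a positive solution of the form
`u(x) = e^{ξ·x} p(x)` with `p` positive, `C²` and `ℤⁿ`-periodic. -/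
def IsPrincipalEV {n : ℕ} (a : (Fin n → ℝ) → Fin n → Fin n → ℝ)
    (b : (Fin n → ℝ) → Fin n → ℝ) (c : (Fin n → ℝ) → ℝ) (ξ : Fin n → ℝ) (lam : ℝ) : Prop :=
  ∃ p : (Fin n → ℝ) → ℝ, ContDiff ℝ 2 p ∧ (∀ x, 0 < p x) ∧ ZPeriodic p ∧
    ∀ x, Pop a b c (fun y => Real.exp (dotR ξ y) * p y) x
      = lam * (Real.exp (dotR ξ x) * p x)

/-- The generalized principal eigenvalue
`Λ₀ = sup {λ ∈ ℝ : ∃ u > 0 with Pu = λu in ℝⁿ}`. -/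
def gpev {n : ℕ} (a : (Fin n → ℝ) → Fin n → Fin n → ℝ) (b : (Fin n → ℝ) → Fin n → ℝ)
    (c : (Fin n → ℝ) → ℝ) : ℝ :=
  sSup {lam : ℝ | ∃ u : (Fin n → ℝ) → ℝ, ContDiff ℝ 2 u ∧ (∀ x, 0 < u x) ∧
    ∀ x, Pop a b c u x = lam * u x}

/-- `k` belongs to the Fermi surface `F_P`: the equation `Pu = 0` admits a nonzero Bloch
solution `u(x) = e^{i k·x} p(x)` with `p` `ℤⁿ`-periodic. -/
def InFermi {n : ℕ} (a : (Fin n → ℝ) → Fin n → Fin n → ℝ) (b : (Fin n → ℝ) → Fin n → ℝ)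
    (c : (Fin n → ℝ) → ℝ) (k : Fin n → ℂ) : Prop :=
  ∃ p : (Fin n → ℝ) → ℂ, ContDiff ℝ 2 p ∧ ZPeriodic p ∧ (∃ x, p x ≠ 0) ∧
    ∀ x, PopC a b c (fun y => Complex.exp (Complex.I * dotCR k y) * p y) x = 0

/-- `(k, lam)` belongs to the Bloch variety `B_P`: the equation `Pu = lam·u` admits a
nonzero Bloch solution with quasimomentum `k`. -/
def InBloch {n : ℕ} (a : (Fin n → ℝ) → Fin n → Fin n → ℝ) (b : (Fin n → ℝ) → Fin n → ℝ)
    (c : (Fin n → ℝ) → ℝ) (k : Fin n → ℂ) (lam : ℂ) : Prop :=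
  ∃ p : (Fin n → ℝ) → ℂ, ContDiff ℝ 2 p ∧ ZPeriodic p ∧ (∃ x, p x ≠ 0) ∧
    ∀ x, PopC a b c (fun y => Complex.exp (Complex.I * dotCR k y) * p y) x
      = lam * (Complex.exp (Complex.I * dotCR k x) * p x)

/-- `k` belongs to the Fermi surface `F_{P*}` of the formal adjoint. -/
def InFermiAdj {n : ℕ} (a : (Fin n → ℝ) → Fin n → Fin n → ℝ) (b : (Fin n → ℝ) → Fin n → ℝ)
    (c : (Fin n → ℝ) → ℝ) (k : Fin n → ℂ) : Prop :=
  ∃ p : (Fin n → ℝ) → ℂ, ContDiff ℝ 2 p ∧ ZPeriodic p ∧ (∃ x, p x ≠ 0) ∧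
    ∀ x, PadjC a b c (fun y => Complex.exp (Complex.I * dotCR k y) * p y) x = 0

/-- `(k, lam)` belongs to the Bloch variety `B_{P*}` of the formal adjoint. -/
def InBlochAdj {n : ℕ} (a : (Fin n → ℝ) → Fin n → Fin n → ℝ) (b : (Fin n → ℝ) → Fin n → ℝ)
    (c : (Fin n → ℝ) → ℝ) (k : Fin n → ℂ) (lam : ℂ) : Prop :=
  ∃ p : (Fin n → ℝ) → ℂ, ContDiff ℝ 2 p ∧ ZPeriodic p ∧ (∃ x, p x ≠ 0) ∧
    ∀ x, PadjC a b c (fun y => Complex.exp (Complex.I * dotCR k y) * p y) x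
      = lam * (Complex.exp (Complex.I * dotCR k x) * p x)

/-- The Euclidean norm of an integer vector `γ ∈ ℤⁿ`. -/
def enormZ {n : ℕ} (γ : Fin n → ℤ) : ℝ := Real.sqrt (∑ i, ((γ i : ℝ)) ^ 2)

/-- The support (indicator) function `h_G(x) = sup_{ξ ∈ G} ξ · x` of a set `G ⊆ ℝⁿ`. -/
def suppFn {n : ℕ} (G : Set (Fin n → ℝ)) (x : Fin n → ℝ) : ℝ :=
  sSup ((fun ξ => dotR ξ x) '' G)

/-- The closed tube `𝒯_G = {k ∈ ℂⁿ : Im k ∈ G}` over a set `G ⊆ ℝⁿ`. -/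
def tubeOver {n : ℕ} (G : Set (Fin n → ℝ)) : Set (Fin n → ℂ) :=
  {k | (fun i => (k i).im) ∈ G}

/-! ### Calculus of partial derivatives -/

lemma contDiff_pd {n : ℕ} {f : (Fin n → ℝ) → ℝ} (hf : ContDiff ℝ 2 f) (j : Fin n) :
    ContDiff ℝ 1 (pd j f) :=
  (hf.fderiv_right (m := 1) (by norm_num)).clm_apply contDiff_const

lemma pd_add {n : ℕ} {f g : (Fin n → ℝ) → ℝ} (hf : Differentiable ℝ f)
    (hg : Differentiable ℝ g) (i : Fin n) :
    pd i (fun x => f x + g x) = fun x => pd i f x + pd i g x := by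
  funext x
  simp only [pd]
  rw [fderiv_fun_add (hf x) (hg x)]
  rfl

lemma pd_const_mul {n : ℕ} {f : (Fin n → ℝ) → ℝ} (hf : Differentiable ℝ f) (s : ℝ) (i : Fin n) :
    pd i (fun x => s * f x) = fun x => s * pd i f x := by
  funext x
  simp only [pd]
  rw [fderiv_const_mul (hf x)]
  rfl

lemma pd_mul {n : ℕ} {f g : (Fin n → ℝ) → ℝ} (hf : Differentiable ℝ f)
    (hg : Differentiable ℝ g) (i : Fin n) :
    pd i (fun x => f x * g x) = fun x => f x * pd i g x + g x * pd i f x := by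
  funext x
  simp only [pd]
  rw [fderiv_fun_mul (hf x) (hg x)]
  rfl

lemma pd_const {n : ℕ} (s : ℝ) (i : Fin n) :
    pd i (fun _ : Fin n → ℝ => s) = fun _ => 0 := by
  funext x
  simp [pd]

lemma pd_exp {n : ℕ} {g : (Fin n → ℝ) → ℝ} (hg : Differentiable ℝ g) (i : Fin n) :
    pd i (fun x => Real.exp (g x)) = fun x => Real.exp (g x) * pd i g x := by
  funext x
  simp only [pd]
  rw [fderiv_exp (hg x)]
  rfl

lemma pd_pd_exp {n : ℕ} {g : (Fin n → ℝ) → ℝ} (hg : ContDiff ℝ 2 g) (i j : Fin n) :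
    pd i (pd j fun x => Real.exp (g x))
      = fun x => Real.exp (g x) * (pd i (pd j g) x + pd i g x * pd j g x) := by
  have hd : Differentiable ℝ g := hg.differentiable (by norm_num)
  rw [pd_exp hd, pd_mul hd.exp ((contDiff_pd hg j).differentiable (by norm_num)), pd_exp hd]
  funext x
  ring

lemma contDiff_dotR {n : ℕ} (ξ : Fin n → ℝ) : ContDiff ℝ 2 (dotR ξ) := by
  unfold dotR
  fun_prop

lemma pd_dotR {n : ℕ} (ξ : Fin n → ℝ) (i : Fin n) : pd i (dotR ξ) = fun _ => ξ i := by
  funext x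
  have h : HasFDerivAt (dotR ξ)
      (∑ k, ξ k • (ContinuousLinearMap.proj k : (Fin n → ℝ) →L[ℝ] ℝ)) x := by
    unfold dotR
    exact HasFDerivAt.fun_sum fun k _ => (hasFDerivAt_apply k x).const_mul (ξ k)
  simp [pd, h.fderiv, Pi.single_apply]

/-! ### Second-order conditions at a minimum -/

/-- At a local minimum of a continuous function on the line, the second derivative is nonnegative:
were it negative, the point would also be a local maximum, hence the function locally constant. -/
lemma deriv_deriv_nonneg {f : ℝ → ℝ} {x : ℝ} (hf : ContinuousAt f x) (hmin : IsLocalMin f x) :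
    0 ≤ deriv (deriv f) x := by
  by_contra! hneg
  have hmax := isLocalMax_of_deriv_deriv_neg hneg hmin.deriv_eq_zero hf
  have hc : f =ᶠ[nhds x] fun _ => f x := by
    filter_upwards [hmin, hmax] with y h1 h2 using le_antisymm h2 h1
  have h := hc.deriv.deriv_eq
  simp at h
  linarith

lemma pd_eq_zero {n : ℕ} {f : (Fin n → ℝ) → ℝ} {x : Fin n → ℝ} (hmin : IsLocalMin f x)
    (i : Fin n) : pd i f x = 0 := by
  simp [pd, hmin.fderiv_eq_zero]

lemma fderiv_eq_sum_pd {n : ℕ} (f : (Fin n → ℝ) → ℝ) (x v : Fin n → ℝ) :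
    fderiv ℝ f x v = ∑ i, v i * pd i f x := by
  conv_lhs => rw [pi_eq_sum_univ' v]
  simp [pd, map_sum, map_smul, Pi.single]

lemma hessian_nonneg {n : ℕ} {f : (Fin n → ℝ) → ℝ} (hf : ContDiff ℝ 2 f) {x : Fin n → ℝ}
    (hmin : IsLocalMin f x) (v : Fin n → ℝ) : 0 ≤ ∑ i, ∑ j, v i * v j * pd i (pd j f) x := by
  have hline : ∀ s : ℝ, HasDerivAt (fun s : ℝ => x + s • v) v s := fun s => by
    simpa using ((hasDerivAt_id s).smul_const v).const_add x
  have h1 : deriv (fun s : ℝ => f (x + s • v)) = fun s => ∑ j, v j * pd j f (x + s • v) := by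
    funext s
    rw [← fderiv_eq_sum_pd]
    exact ((hf.differentiable (by norm_num) _).hasFDerivAt.comp_hasDerivAt s (hline s)).deriv
  have h2 : deriv (deriv (fun s : ℝ => f (x + s • v))) 0
      = ∑ i, ∑ j, v i * v j * pd i (pd j f) x := by
    rw [h1]
    have h3 : ∀ j, HasDerivAt (fun s : ℝ => v j * pd j f (x + s • v))
        (v j * ∑ i, v i * pd i (pd j f) x) 0 := fun j => by
      rw [← fderiv_eq_sum_pd]
      have h4 := (((contDiff_pd hf j).differentiable (by norm_num)
        (x + (0 : ℝ) • v)).hasFDerivAt.comp_hasDerivAt 0 (hline 0)).const_mul (v j)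
      simpa using h4
    rw [(HasDerivAt.fun_sum fun j (_ : j ∈ Finset.univ) => h3 j).deriv, Finset.sum_comm]
    simp only [Finset.mul_sum]
    exact Finset.sum_congr rfl fun i _ => Finset.sum_congr rfl fun j _ => by ring
  rw [← h2]
  have hcont : Continuous fun s : ℝ => x + s • v := by fun_prop
  refine deriv_deriv_nonneg (hf.continuous.comp hcont).continuousAt ?_
  have h5 : Tendsto (fun s : ℝ => x + s • v) (nhds 0) (nhds x) := by
    simpa using hcont.tendsto 0
  have h6 := h5.eventually hmin
  simpa [IsLocalMin, IsMinFilter] using h6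

lemma pd_comm {n : ℕ} {f : (Fin n → ℝ) → ℝ} (hf : ContDiff ℝ 2 f) (x : Fin n → ℝ)
    (i j : Fin n) : pd i (pd j f) x = pd j (pd i f) x := by
  have h : ∀ i j, pd i (pd j f) x = fderiv ℝ (fderiv ℝ f) x (Pi.single i 1) (Pi.single j 1) := by
    intro i j
    have hd : DifferentiableAt ℝ (fderiv ℝ f) x :=
      (hf.fderiv_right (m := 1) (by norm_num)).differentiable (by norm_num) x
    unfold pd
    rw [fderiv_clm_apply hd (differentiableAt_const _)]
    simp
  rw [h, h]
  exact (hf.contDiffAt.isSymmSndFDerivAt (by simp)) _ _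

/-- The maximum-principle inequality `tr (A D²f) ≥ 0` at a local minimum of `f`, for a matrix `A`
with nonnegative quadratic form. As `D²f` is symmetric, `A` may be replaced by its symmetric part,
which is a sum of rank-one matrices `v vᵀ`; the trace is then a sum of values of the Hessian form. -/
lemma trace_hessian_nonneg {n : ℕ} {f : (Fin n → ℝ) → ℝ} (hf : ContDiff ℝ 2 f)
    {x : Fin n → ℝ} (hmin : IsLocalMin f x) (A : Fin n → Fin n → ℝ)
    (hA : ∀ ζ : Fin n → ℝ, 0 ≤ ∑ i, ∑ j, A i j * ζ i * ζ j) :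
    0 ≤ ∑ i, ∑ j, A i j * pd i (pd j f) x := by
  set S : Matrix (Fin n) (Fin n) ℝ := Matrix.of fun i j => A i j + A j i with hS
  have hflip : ∑ i, ∑ j, A j i * pd i (pd j f) x = ∑ i, ∑ j, A i j * pd i (pd j f) x := by
    rw [Finset.sum_comm]
    exact Finset.sum_congr rfl fun i _ => Finset.sum_congr rfl fun j _ => by
      rw [pd_comm hf x j i]
  have hpsd : S.PosSemidef := by
    refine Matrix.PosSemidef.of_dotProduct_mulVec_nonneg ?_ fun ζ => ?_
    · ext i j
      simp [hS, add_comm]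
    · have h1 : star ζ ⬝ᵥ S.mulVec ζ
          = (∑ i, ∑ j, A i j * ζ i * ζ j) + ∑ i, ∑ j, A j i * ζ i * ζ j := by
        simp only [dotProduct, Matrix.mulVec, Finset.mul_sum, ← Finset.sum_add_distrib]
        exact Finset.sum_congr rfl fun i _ => Finset.sum_congr rfl fun j _ => by
          simp [hS]; ring
      have h2 : ∑ i, ∑ j, A j i * ζ i * ζ j = ∑ i, ∑ j, A i j * ζ i * ζ j := by
        rw [Finset.sum_comm]
        exact Finset.sum_congr rfl fun i _ => Finset.sum_congr rfl fun j _ => by ring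
      rw [h1, h2]
      linarith [hA ζ]
  obtain ⟨m, B, hB⟩ := Matrix.posSemidef_iff_eq_sum_vecMulVec.mp hpsd
  have h3 : ∑ i, ∑ j, S i j * pd i (pd j f) x
      = ∑ k, ∑ i, ∑ j, B k i * B k j * pd i (pd j f) x := by
    rw [Finset.sum_comm]
    simp only [hB, Matrix.sum_apply, Matrix.vecMulVec_apply, star_trivial,
      Finset.sum_mul]
    rw [Finset.sum_comm, Finset.sum_comm (s := Finset.univ (α := Fin m))]
    exact Finset.sum_congr rfl fun i _ => Finset.sum_comm
  have h4 : 0 ≤ ∑ i, ∑ j, S i j * pd i (pd j f) x := by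
    rw [h3]
    exact Finset.sum_nonneg fun k _ => hessian_nonneg hf hmin (B k)
  have h5 : ∑ i, ∑ j, S i j * pd i (pd j f) x
      = (∑ i, ∑ j, A i j * pd i (pd j f) x) + ∑ i, ∑ j, A j i * pd i (pd j f) x := by
    simp only [← Finset.sum_add_distrib]
    exact Finset.sum_congr rfl fun i _ => Finset.sum_congr rfl fun j _ => by
      simp [hS]; ring
  linarith

/-! ### Extrema of periodic functions -/

lemma exists_cube_rep {n : ℕ} {f : (Fin n → ℝ) → ℝ} (hp : ZPeriodic f) (x : Fin n → ℝ) :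
    ∃ y ∈ Set.Icc (0 : Fin n → ℝ) 1, f y = f x := by
  refine ⟨fun i => Int.fract (x i), ⟨fun i => Int.fract_nonneg _, fun i => (Int.fract_lt_one _).le⟩, ?_⟩
  rw [← hp (fun i => Int.fract (x i)) fun i => ⌊x i⌋]
  congr 1
  funext i
  exact Int.fract_add_floor (x i)

lemma exists_min {n : ℕ} {f : (Fin n → ℝ) → ℝ} (hf : Continuous f) (hp : ZPeriodic f) :
    ∃ x, ∀ y, f x ≤ f y := by
  obtain ⟨x, -, hx⟩ := isCompact_Icc.exists_isMinOn
    (Set.nonempty_Icc.mpr (zero_le_one' (Fin n → ℝ))) hf.continuousOn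
  refine ⟨x, fun y => ?_⟩
  obtain ⟨z, hz, hzy⟩ := exists_cube_rep hp y
  exact hzy ▸ hx hz

lemma exists_bound {n : ℕ} {f : (Fin n → ℝ) → ℝ} (hf : Continuous f) (hp : ZPeriodic f) :
    ∃ C, ∀ y, f y ≤ C := by
  obtain ⟨x, hx⟩ := exists_min (f := fun y => -f y) hf.neg fun y γ => by simp [hp y γ]
  exact ⟨f x, fun y => by linarith [hx y]⟩

/-! ### The strong minimum principle -/

/-- Strong minimum principle for an elliptic operator without zeroth-order term: a supersolution
attaining its global minimum is constant. If `v y > min v`, then `v - min v` is compared, on an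
annulus around `y` reaching past the minimum point, with a small multiple of
`exp (-α |x - y|²) - exp (-α R)`, a strict subsolution there once `α` is large. -/
lemma strong_min {n : ℕ} {a : (Fin n → ℝ) → Fin n → Fin n → ℝ}
    {β : (Fin n → ℝ) → Fin n → ℝ} (ha : ∀ i j, Continuous fun x => a x i j)
    (hβ : ∀ i, Continuous fun x => β x i) {a₀ : ℝ} (ha₀ : 0 < a₀)
    (hell : ∀ x ζ : Fin n → ℝ, a₀ * ∑ i, ζ i ^ 2 ≤ ∑ i, ∑ j, a x i j * ζ i * ζ j)
    {v : (Fin n → ℝ) → ℝ} (hv : ContDiff ℝ 2 v) {x₀ : Fin n → ℝ} (hx₀ : ∀ x, v x₀ ≤ v x)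
    (hL : ∀ x, 0 ≤ -(∑ i, ∑ j, a x i j * pd i (pd j v) x) + ∑ i, β x i * pd i v x)
    (y : Fin n → ℝ) : v y = v x₀ := by
  by_contra hne
  have hlt : v x₀ < v y := lt_of_le_of_ne (hx₀ y) (Ne.symm hne)
  set q : (Fin n → ℝ) → ℝ := fun x => ∑ i, (x i - y i) ^ 2 with hq
  have hqc : Continuous q := by fun_prop
  have hcoord : ∀ x i, (x i - y i) ^ 2 ≤ q x := fun x i =>
    Finset.single_le_sum (f := fun i => (x i - y i) ^ 2) (fun i _ => sq_nonneg _)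
      (Finset.mem_univ i)
  set δ : ℝ := (v y - v x₀) / 2 with hδ
  have hδ0 : 0 < δ := by rw [hδ]; linarith
  obtain ⟨r, hr0, hr⟩ : ∃ r > 0, ∀ x, q x ≤ r → v x₀ + δ < v x := by
    have h1 : ∀ᶠ x in nhds y, v x₀ + δ < v x :=
      hv.continuous.continuousAt.eventually_const_lt (by rw [hδ]; linarith)
    obtain ⟨ρ, hρ, hball⟩ := Metric.eventually_nhds_iff.mp h1
    refine ⟨(ρ / 2) ^ 2, by positivity, fun x hx => hball ?_⟩
    refine lt_of_le_of_lt ((dist_pi_le_iff (by positivity : (0 : ℝ) ≤ ρ / 2)).mpr fun i => ?_)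
      (half_lt_self hρ)
    rw [Real.dist_eq]
    exact abs_le_of_sq_le_sq ((hcoord x i).trans hx) (by positivity)
  set R : ℝ := q x₀ + 1 with hR
  have hKc : IsCompact {x | q x ≤ R} := by
    refine Metric.isCompact_of_isClosed_isBounded (isClosed_le hqc continuous_const) ?_
    refine (Metric.isBounded_closedBall (x := y) (r := Real.sqrt R)).subset fun x hx => ?_
    refine (dist_pi_le_iff (Real.sqrt_nonneg R)).mpr fun i => ?_
    rw [Real.dist_eq]
    exact Real.abs_le_sqrt ((hcoord x i).trans hx)
  have hx₀K : x₀ ∈ {x | q x ≤ R} := by simp [hR]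
  obtain ⟨C, hC⟩ : ∃ C, ∀ x, q x ≤ R →
      (∑ i, a x i i) - ∑ i, β x i * (x i - y i) ≤ C := by
    have hTc : Continuous fun x => (∑ i, a x i i) - ∑ i, β x i * (x i - y i) := by
      fun_prop
    obtain ⟨z, -, hz⟩ := hKc.exists_isMaxOn ⟨x₀, hx₀K⟩ hTc.continuousOn
    exact ⟨_, fun x hx => hz hx⟩
  -- This value makes `2 α a₀ r = |C| + 1`, which beats the lower-order terms on `q ≥ r`.
  set α : ℝ := (|C| + 1) / (2 * a₀ * r) with hα
  have hα0 : 0 < α := by positivity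
  have hαC : 2 * α * (a₀ * r) = |C| + 1 := by rw [hα]; field_simp
  set g : (Fin n → ℝ) → ℝ := fun x => -α * q x with hg
  have hqC : ContDiff ℝ 2 q := by fun_prop
  have hgC : ContDiff ℝ 2 g := by fun_prop
  have hpg : ∀ j, pd j g = fun x => -2 * α * (x j - y j) := fun j => by
    funext x
    have h : HasFDerivAt g (-α • ∑ k, (2 * (x k - y k)) •
        (ContinuousLinearMap.proj k : (Fin n → ℝ) →L[ℝ] ℝ)) x := by
      refine HasFDerivAt.const_mul (HasFDerivAt.fun_sum fun k _ => ?_) (-α)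
      simpa using ((hasFDerivAt_apply k x).sub_const (y k)).pow 2
    simp [pd, h.fderiv, Pi.single_apply]
    ring
  have hppg : ∀ i j x, pd i (pd j g) x = if i = j then -2 * α else 0 := fun i j x => by
    have h : HasFDerivAt (pd j g) ((-2 * α) •
        (ContinuousLinearMap.proj j : (Fin n → ℝ) →L[ℝ] ℝ)) x := by
      rw [hpg]
      exact ((hasFDerivAt_apply j x).sub_const (y j)).const_mul (-2 * α)
    change fderiv ℝ (pd j g) x (Pi.single i 1) = _
    rw [h.fderiv]
    simp [Pi.single_apply, eq_comm]
  set e : (Fin n → ℝ) → ℝ := fun x => Real.exp (g x) with he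
  have heC : ContDiff ℝ 2 e := hgC.exp
  have hpe : ∀ i x, pd i e x = e x * (-2 * α * (x i - y i)) := fun i x => by
    rw [he, pd_exp (hgC.differentiable (by norm_num)), hpg]
  have hppe : ∀ i j x, pd i (pd j e) x = e x * ((if i = j then -2 * α else 0)
      + (-2 * α * (x i - y i)) * (-2 * α * (x j - y j))) := fun i j x => by
    rw [he, pd_pd_exp hgC]
    beta_reduce
    rw [hppg, hpg, hpg]
  have hLe : ∀ x, -(∑ i, ∑ j, a x i j * pd i (pd j e) x) + ∑ i, β x i * pd i e x
      = 2 * α * e x * (-(2 * α * ∑ i, ∑ j, a x i j * (x i - y i) * (x j - y j))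
        + ((∑ i, a x i i) - ∑ i, β x i * (x i - y i))) := fun x => by
    have h1 : ∑ i, ∑ j, a x i j * pd i (pd j e) x
        = e x * (-2 * α) * (∑ i, a x i i)
          + 4 * α ^ 2 * e x * ∑ i, ∑ j, a x i j * (x i - y i) * (x j - y j) := by
      have h2 : ∑ i, a x i i = ∑ i, ∑ j, if i = j then a x i j else 0 := by simp
      rw [h2]
      simp only [Finset.mul_sum, ← Finset.sum_add_distrib, hppe]
      refine Finset.sum_congr rfl fun i _ => Finset.sum_congr rfl fun j _ => ?_
      split_ifs <;> ring
    have h3 : ∑ i, β x i * pd i e x = -2 * α * e x * ∑ i, β x i * (x i - y i) := by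
      simp only [Finset.mul_sum, hpe]
      exact Finset.sum_congr rfl fun i _ => by ring
    rw [h1, h3]
    ring
  set f : (Fin n → ℝ) → ℝ := fun x => v x + -δ * e x with hf
  have hfC : ContDiff ℝ 2 f := by fun_prop
  obtain ⟨x₁, hx₁K, hx₁⟩ := hKc.exists_isMinOn ⟨x₀, hx₀K⟩ hfC.continuous.continuousOn
  -- The value on the outer sphere `q = R` exceeds the value at `x₀`.
  have hfx₁ : f x₁ < v x₀ - δ * Real.exp (-α * R) := by
    have h1 : f x₁ ≤ f x₀ := hx₁ hx₀K
    have h2 : Real.exp (-α * R) < e x₀ := Real.exp_lt_exp.mpr (by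
      simp only [hg, hR]; linarith)
    have h3 := mul_lt_mul_of_pos_left h2 hδ0
    simp only [hf] at h1 ⊢
    linarith
  have hlt_R : q x₁ < R := by
    refine lt_of_le_of_ne hx₁K fun h => ?_
    simp only [hf, he, hg, h] at hfx₁
    linarith [hx₀ x₁]
  have hgt_r : r < q x₁ := by
    by_contra! h
    have h1 := hr x₁ h
    have h2 : e x₁ ≤ 1 := Real.exp_le_one_iff.mpr (by
      have : 0 ≤ q x₁ := Finset.sum_nonneg fun i _ => sq_nonneg _
      simp only [hg]; nlinarith)
    have h3 := mul_le_mul_of_nonneg_left h2 hδ0.le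
    have h4 := mul_pos hδ0 (Real.exp_pos (-α * R))
    simp only [hf] at hfx₁
    linarith
  have hloc : IsLocalMin f x₁ :=
    hx₁.isLocalMin (mem_of_superset ((isOpen_lt hqc continuous_const).mem_nhds hlt_R)
      fun z (hz : q z < R) => hz.le)
  have htr := trace_hessian_nonneg hfC hloc (a x₁) fun ζ =>
    le_trans (mul_nonneg ha₀.le (Finset.sum_nonneg fun i _ => sq_nonneg _)) (hell x₁ ζ)
  have hdv := hv.differentiable (by norm_num)
  have hde := heC.differentiable (by norm_num)
  have hpf : ∀ i, pd i f = fun x => pd i v x + -δ * pd i e x := fun i => by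
    rw [hf, pd_add hdv (hde.const_mul _), pd_const_mul hde]
  have hppf : ∀ i j x, pd i (pd j f) x = pd i (pd j v) x + -δ * pd i (pd j e) x := fun i j x => by
    have h1 := (contDiff_pd hv j).differentiable (by norm_num)
    have h2 := (contDiff_pd heC j).differentiable (by norm_num)
    rw [hpf, pd_add h1 (h2.const_mul _), pd_const_mul h2]
  have hgrad : ∑ i, β x₁ i * pd i f x₁ = 0 :=
    Finset.sum_eq_zero fun i _ => by rw [pd_eq_zero hloc i, mul_zero]
  have hLf : -(∑ i, ∑ j, a x₁ i j * pd i (pd j f) x₁) + ∑ i, β x₁ i * pd i f x₁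
      = (-(∑ i, ∑ j, a x₁ i j * pd i (pd j v) x₁) + ∑ i, β x₁ i * pd i v x₁)
        - δ * (-(∑ i, ∑ j, a x₁ i j * pd i (pd j e) x₁) + ∑ i, β x₁ i * pd i e x₁) := by
    have h1 : ∑ i, ∑ j, a x₁ i j * pd i (pd j f) x₁
        = (∑ i, ∑ j, a x₁ i j * pd i (pd j v) x₁)
          + -δ * ∑ i, ∑ j, a x₁ i j * pd i (pd j e) x₁ := by
      simp only [Finset.mul_sum, ← Finset.sum_add_distrib, hppf]
      exact Finset.sum_congr rfl fun i _ => Finset.sum_congr rfl fun j _ => by ring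
    have h2 : ∑ i, β x₁ i * pd i f x₁
        = (∑ i, β x₁ i * pd i v x₁) + -δ * ∑ i, β x₁ i * pd i e x₁ := by
      simp only [Finset.mul_sum, ← Finset.sum_add_distrib, hpf]
      exact Finset.sum_congr rfl fun i _ => by ring
    rw [h1, h2]
    ring
  have hneg : -(∑ i, ∑ j, a x₁ i j * pd i (pd j e) x₁) + ∑ i, β x₁ i * pd i e x₁ < 0 := by
    rw [hLe]
    refine mul_neg_of_pos_of_neg (by positivity) ?_
    have h1 : a₀ * r ≤ ∑ i, ∑ j, a x₁ i j * (x₁ i - y i) * (x₁ j - y j) :=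
      (mul_le_mul_of_nonneg_left hgt_r.le ha₀.le).trans (hell x₁ fun i => x₁ i - y i)
    have h2 := mul_le_mul_of_nonneg_left h1 (by positivity : 0 ≤ 2 * α)
    linarith [hC x₁ hx₁K, le_abs_self C]
  have := mul_neg_of_pos_of_neg hδ0 hneg
  linarith [hL x₁]

/-! ### The eigenvalue equation and its consequences -/

/-- The logarithmic form of the eigenvalue equation: writing the positive solution as
`exp (ξ · x + φ x)` with `φ = log p` turns `Pu = lam · u` into a Riccati-type equation for `φ`. -/
lemma exists_log {n : ℕ} {a : (Fin n → ℝ) → Fin n → Fin n → ℝ}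
    {b : (Fin n → ℝ) → Fin n → ℝ} {c : (Fin n → ℝ) → ℝ} {ξ : Fin n → ℝ} {lam : ℝ}
    (h : IsPrincipalEV a b c ξ lam) :
    ∃ φ : (Fin n → ℝ) → ℝ, ContDiff ℝ 2 φ ∧ ZPeriodic φ ∧ ∀ x,
      -(∑ i, ∑ j, a x i j * (pd i (pd j φ) x + (ξ i + pd i φ x) * (ξ j + pd j φ x)))
        + ∑ i, b x i * (ξ i + pd i φ x) + c x = lam := by
  obtain ⟨p, hp, hpos, hper, heq⟩ := h
  have hφ : ContDiff ℝ 2 fun x => Real.log (p x) := hp.log fun x => (hpos x).ne'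
  refine ⟨fun x => Real.log (p x), hφ, fun x γ => by simp only [hper x γ], fun x => ?_⟩
  set φ : (Fin n → ℝ) → ℝ := fun x => Real.log (p x) with hφdef
  have hd := contDiff_dotR ξ
  set g : (Fin n → ℝ) → ℝ := fun x => dotR ξ x + φ x with hg
  have hgC : ContDiff ℝ 2 g := hd.add hφ
  have hu : (fun y => Real.exp (dotR ξ y) * p y) = fun y => Real.exp (g y) := by
    funext y
    rw [hg, Real.exp_add, hφdef, Real.exp_log (hpos y)]
  have hpg : ∀ i, pd i g = fun x => ξ i + pd i φ x := fun i => by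
    rw [hg, pd_add (hd.differentiable (by norm_num)) (hφ.differentiable (by norm_num)), pd_dotR]
  have hppg : ∀ i j, pd i (pd j g) x = pd i (pd j φ) x := fun i j => by
    rw [hpg, pd_add (differentiable_const _)
      ((contDiff_pd hφ j).differentiable (by norm_num)), pd_const]
    simp
  have h1 := heq x
  rw [show Real.exp (dotR ξ x) * p x = Real.exp (g x) from congrFun hu x, hu] at h1
  have h2 : Pop a b c (fun y => Real.exp (g y)) x = Real.exp (g x) *
      (-(∑ i, ∑ j, a x i j * (pd i (pd j φ) x + (ξ i + pd i φ x) * (ξ j + pd j φ x)))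
        + ∑ i, b x i * (ξ i + pd i φ x) + c x) := by
    unfold Pop
    rw [mul_add, mul_add, mul_neg]
    simp only [Finset.mul_sum, pd_pd_exp hgC, hppg]
    simp only [pd_exp (hgC.differentiable (by norm_num)), hpg]
    congr 1
    · congr 1
      · congr 1
        exact Finset.sum_congr rfl fun i _ => Finset.sum_congr rfl fun j _ => by ring
      · exact Finset.sum_congr rfl fun i _ => by ring
    · ring
  rw [h2, mul_comm lam] at h1
  exact mul_left_cancel₀ (Real.exp_ne_zero _) h1

/-- At a minimum of the periodic factor only the terms in `ξ` alone and the Hessian survive, and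
`Λ ξ ≤ -a₀ |ξ|² + b · ξ + c`, which is bounded independently of `ξ`. -/
lemma bddAbove_range {n : ℕ} {a : (Fin n → ℝ) → Fin n → Fin n → ℝ}
    {b : (Fin n → ℝ) → Fin n → ℝ} {c : (Fin n → ℝ) → ℝ} (hP : IsPeriodicElliptic a b c)
    {Λ : (Fin n → ℝ) → ℝ} (hΛ : ∀ ξ, IsPrincipalEV a b c ξ (Λ ξ)) :
    BddAbove (Set.range Λ) := by
  obtain ⟨-, hb, hc, -, hbp, hcp, a₀, ha₀, hell⟩ := hP
  have hbc : ∀ i, Continuous fun x => b x i := fun i => (hb i).continuous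
  obtain ⟨C, hC⟩ := exists_bound (f := fun x => (∑ i, b x i ^ 2 / (4 * a₀)) + c x)
    (by fun_prop) (fun x γ => by simp only [hbp x γ, hcp x γ])
  refine ⟨C, ?_⟩
  rintro _ ⟨ξ, rfl⟩
  obtain ⟨φ, hφ, hφp, heq⟩ := exists_log (hΛ ξ)
  obtain ⟨x, hx⟩ := exists_min hφ.continuous hφp
  have hloc : IsLocalMin φ x := Filter.Eventually.of_forall hx
  have htr := trace_hessian_nonneg hφ hloc (a x) fun ζ =>
    le_trans (mul_nonneg ha₀.le (Finset.sum_nonneg fun i _ => sq_nonneg _)) (hell x ζ)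
  have h1 := heq x
  simp only [pd_eq_zero hloc, add_zero, mul_add, Finset.sum_add_distrib, ← mul_assoc] at h1
  have h2 := hell x ξ
  -- Completing the square in each coordinate of `ξ`.
  have h3 : ∑ i, b x i * ξ i ≤ (∑ i, b x i ^ 2 / (4 * a₀)) + a₀ * ∑ i, ξ i ^ 2 := by
    rw [Finset.mul_sum, ← Finset.sum_add_distrib]
    refine Finset.sum_le_sum fun i _ => ?_
    have h4 : b x i ^ 2 / (4 * a₀) + a₀ * ξ i ^ 2 - b x i * ξ i
        = (b x i - 2 * a₀ * ξ i) ^ 2 / (4 * a₀) := by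
      field_simp
      ring
    have h5 : 0 ≤ (b x i - 2 * a₀ * ξ i) ^ 2 / (4 * a₀) := by positivity
    linarith
  linarith [hC x]

/-- Strict concavity. If it failed, the convex combination of the log-solutions for `ξ` and `η`,
minus the log-solution for the intermediate vector, would be a periodic supersolution of a linear
elliptic operator, hence constant; the quadratic defect would then vanish identically, although it
is positive wherever the gradients of the two log-solutions differ. -/
lemma strict_ineq {n : ℕ} {a : (Fin n → ℝ) → Fin n → Fin n → ℝ}
    {b : (Fin n → ℝ) → Fin n → ℝ} {c : (Fin n → ℝ) → ℝ} (hP : IsPeriodicElliptic a b c)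
    {Λ : (Fin n → ℝ) → ℝ} (hΛ : ∀ ξ, IsPrincipalEV a b c ξ (Λ ξ))
    {ξ η : Fin n → ℝ} (hne : ξ ≠ η) {s t : ℝ} (hs : 0 < s) (ht : 0 < t) (hst : s + t = 1) :
    s * Λ ξ + t * Λ η < Λ (s • ξ + t • η) := by
  obtain ⟨ha, hb, -, -, -, -, a₀, ha₀, hell⟩ := hP
  have hac : ∀ i j, Continuous fun x => a x i j := fun i j => (ha i j).continuous
  have hbc : ∀ i, Continuous fun x => b x i := fun i => (hb i).continuous
  obtain ⟨φ₁, h₁, hp₁, heq₁⟩ := exists_log (hΛ ξ)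
  obtain ⟨φ₂, h₂, hp₂, heq₂⟩ := exists_log (hΛ η)
  obtain ⟨φ₃, h₃, hp₃, heq₃⟩ := exists_log (hΛ (s • ξ + t • η))
  by_contra! hle
  have d₁ := h₁.differentiable (by norm_num)
  have d₂ := h₂.differentiable (by norm_num)
  have d₃ := h₃.differentiable (by norm_num)
  have dd : ∀ {φ : (Fin n → ℝ) → ℝ}, ContDiff ℝ 2 φ → ∀ j, Differentiable ℝ (pd j φ) :=
    fun h j => (contDiff_pd h j).differentiable (by norm_num)
  have cc₁ : ∀ j, Continuous (pd j φ₁) := fun j => (dd h₁ j).continuous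
  have cc₂ : ∀ j, Continuous (pd j φ₂) := fun j => (dd h₂ j).continuous
  have cc₃ : ∀ j, Continuous (pd j φ₃) := fun j => (dd h₃ j).continuous
  set v : (Fin n → ℝ) → ℝ := fun x => (s * φ₁ x + t * φ₂ x) + -1 * φ₃ x with hv
  have hvC : ContDiff ℝ 2 v := by fun_prop
  have hvp : ZPeriodic v := fun x γ => by simp only [hv, hp₁ x γ, hp₂ x γ, hp₃ x γ]
  have hpv : ∀ i, pd i v = fun x => (s * pd i φ₁ x + t * pd i φ₂ x) + -1 * pd i φ₃ x := fun i => by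
    rw [hv, pd_add ((d₁.const_mul _).fun_add (d₂.const_mul _)) (d₃.const_mul _),
      pd_add (d₁.const_mul _) (d₂.const_mul _), pd_const_mul d₁, pd_const_mul d₂, pd_const_mul d₃]
  have hppv : ∀ i j x, pd i (pd j v) x
      = (s * pd i (pd j φ₁) x + t * pd i (pd j φ₂) x) + -1 * pd i (pd j φ₃) x := fun i j x => by
    have e₁ := dd h₁ j
    have e₂ := dd h₂ j
    have e₃ := dd h₃ j
    rw [hpv, pd_add ((e₁.const_mul _).fun_add (e₂.const_mul _)) (e₃.const_mul _),
      pd_add (e₁.const_mul _) (e₂.const_mul _), pd_const_mul e₁, pd_const_mul e₂, pd_const_mul e₃]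
  -- The gradients of the three log-solutions.
  set G₁ : (Fin n → ℝ) → Fin n → ℝ := fun x i => ξ i + pd i φ₁ x with hG₁
  set G₂ : (Fin n → ℝ) → Fin n → ℝ := fun x i => η i + pd i φ₂ x with hG₂
  set G₃ : (Fin n → ℝ) → Fin n → ℝ := fun x i => (s • ξ + t • η) i + pd i φ₃ x with hG₃
  -- The drift that linearizes the difference of the quadratic gradient terms.
  set β : (Fin n → ℝ) → Fin n → ℝ := fun x i =>
    b x i - ∑ j, (a x i j * (s * G₁ x j + t * G₂ x j) + a x j i * G₃ x j) with hβ
  have hβc : ∀ i, Continuous fun x => β x i := fun i => by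
    simp only [hβ, hG₁, hG₂, hG₃]
    fun_prop
  have hkey : ∀ x, -(∑ i, ∑ j, a x i j * pd i (pd j v) x) + ∑ i, β x i * pd i v x
      = (s * Λ ξ + t * Λ η - Λ (s • ξ + t • η))
        + s * t * ∑ i, ∑ j, a x i j * (G₁ x i - G₂ x i) * (G₁ x j - G₂ x j) := fun x => by
    have hvG : ∀ i, pd i v x = s * G₁ x i + t * G₂ x i - G₃ x i := fun i => by
      rw [hpv]
      simp only [hG₁, hG₂, hG₃, Pi.add_apply, Pi.smul_apply, smul_eq_mul]
      ring
    have hβs : ∑ i, β x i * pd i v x = (∑ i, b x i * pd i v x)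
        - ∑ i, ∑ j, (a x i j * ((s * G₁ x j + t * G₂ x j) * pd i v x)
          + a x i j * (G₃ x i * pd j v x)) := by
      have h1 : ∑ i, ∑ j, a x i j * (G₃ x i * pd j v x)
          = ∑ i, ∑ j, a x j i * (G₃ x j * pd i v x) := Finset.sum_comm
      simp only [Finset.sum_add_distrib, h1]
      simp only [hβ, sub_mul, Finset.sum_sub_distrib, Finset.sum_mul, add_mul,
        Finset.sum_add_distrib, mul_assoc]
    have hbs : ∑ i, b x i * pd i v x
        = s * (∑ i, b x i * G₁ x i) + t * (∑ i, b x i * G₂ x i) - ∑ i, b x i * G₃ x i := by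
      simp only [Finset.mul_sum, ← Finset.sum_add_distrib, ← Finset.sum_sub_distrib, hvG]
      exact Finset.sum_congr rfl fun i _ => by ring
    have hc : c x = s * c x + t * c x := by rw [← add_mul, hst, one_mul]
    rw [hβs, hbs, ← heq₁ x, ← heq₂ x, ← heq₃ x]
    have hsum : (∑ i, ∑ j, a x i j * pd i (pd j v) x)
        + (∑ i, ∑ j, (a x i j * ((s * G₁ x j + t * G₂ x j) * pd i v x)
          + a x i j * (G₃ x i * pd j v x)))
        + s * t * (∑ i, ∑ j, a x i j * (G₁ x i - G₂ x i) * (G₁ x j - G₂ x j))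
        = s * (∑ i, ∑ j, a x i j * (pd i (pd j φ₁) x + G₁ x i * G₁ x j))
          + t * (∑ i, ∑ j, a x i j * (pd i (pd j φ₂) x + G₂ x i * G₂ x j))
          - ∑ i, ∑ j, a x i j * (pd i (pd j φ₃) x + G₃ x i * G₃ x j) := by
      simp only [Finset.mul_sum, ← Finset.sum_add_distrib, ← Finset.sum_sub_distrib, hvG, hppv]
      have ht' : t = 1 - s := by linarith
      refine Finset.sum_congr rfl fun i _ => Finset.sum_congr rfl fun j _ => ?_
      rw [ht']
      ring
    linarith
  have hquad : ∀ x, 0 ≤ ∑ i, ∑ j, a x i j * (G₁ x i - G₂ x i) * (G₁ x j - G₂ x j) := fun x =>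
    le_trans (mul_nonneg ha₀.le (Finset.sum_nonneg fun i _ => sq_nonneg _))
      (hell x fun i => G₁ x i - G₂ x i)
  have hst0 : 0 < s * t := mul_pos hs ht
  obtain ⟨x₀, hx₀⟩ := exists_min hvC.continuous hvp
  have hconst := strong_min hac hβc ha₀ hell hvC hx₀ fun x => by
    rw [hkey]
    linarith [mul_nonneg hst0.le (hquad x)]
  have hpv0 : ∀ i, pd i v = fun _ => 0 := fun i => by
    rw [show v = fun _ => v x₀ from funext hconst, pd_const]
  -- The contradiction arises at a minimum of the periodic function `φ₁ - φ₂`.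
  obtain ⟨z, hz⟩ := exists_min (f := fun x => φ₁ x + -1 * φ₂ x)
    (by fun_prop) (fun x γ => by simp only [hp₁ x γ, hp₂ x γ])
  have hzl : IsLocalMin (fun x => φ₁ x + -1 * φ₂ x) z := Filter.Eventually.of_forall hz
  have hzi : ∀ i, G₁ z i - G₂ z i = ξ i - η i := fun i => by
    have h := pd_eq_zero hzl i
    rw [pd_add d₁ (d₂.const_mul _), pd_const_mul d₂] at h
    simp only [hG₁, hG₂]
    linarith
  have h0 := hkey z
  simp only [hpv0, pd_const, mul_zero, Finset.sum_const_zero, neg_zero, add_zero, hzi] at h0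
  have hpos : 0 < ∑ i, (ξ i - η i) ^ 2 := by
    obtain ⟨i, hi⟩ := Function.ne_iff.mp hne
    exact Finset.sum_pos' (fun i _ => sq_nonneg _)
      ⟨i, Finset.mem_univ i, sq_pos_of_ne_zero (sub_ne_zero.mpr hi)⟩
  have h1 := hell z fun i => ξ i - η i
  have h2 := mul_pos hst0 (lt_of_lt_of_le (mul_pos ha₀ hpos) h1)
  linarith

/-- The function `Λ : ℝⁿ → ℝ` is bounded from above and strictly concave. -/
theorem Lambda_bddAbove_strictConcave {n : ℕ}
    (a : (Fin n → ℝ) → Fin n → Fin n → ℝ) (b : (Fin n → ℝ) → Fin n → ℝ)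
    (c : (Fin n → ℝ) → ℝ) (hP : IsPeriodicElliptic a b c)
    (Λ : (Fin n → ℝ) → ℝ) (hΛ : ∀ ξ, IsPrincipalEV a b c ξ (Λ ξ)) :
    BddAbove (Set.range Λ) ∧ StrictConcaveOn ℝ Set.univ Λ := by
  exact ⟨bddAbove_range hP hΛ, convex_univ, fun ξ _ η _ hne s t hs ht hst =>
    strict_ineq hP hΛ hne hs ht hst⟩
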